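/- The Lindelöf Hypothesis holds if and only if, for every positive integer k, the sequence (ℓ_{n,k})_{n ≥ -k} is square-summable, i.e. Σ_{n ≥ -k} ℓ_{n,k}² < ∞. -/

import Mathlib

open scoped Real Topology
open Complex Filter MeasureTheory Finset Asymptotics

/-- The analytic extension of `s ↦ ((s-1) * ζ(s))^k` to `s = 1` (where its value is `1`). -/
noncomputable def zetaPowAux (k : ℕ) : ℂ → ℂ :=
  Function.update (fun s : ℂ => ((s - 1) * riemannZeta s) ^ k) 1 1

/-- `lam k j` is the Taylor coefficient `λ_{j,k}`, i.e. the `j`-th derivative at `s = 1` of the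
analytic extension of `(s-1)^k ζ(s)^k`; these numbers are real, and we record their real part. -/
noncomputable def lam (k j : ℕ) : ℝ :=
  (iteratedDeriv j (zetaPowAux k) 1).re

/-- The Fourier coefficients `ℓ_{n,k}` for `n ≥ -k` (an integer index). -/
noncomputable def ell (k : ℕ) (n : ℤ) : ℝ :=
  if 1 ≤ n then
    (-1 : ℝ) ^ n.toNat *
      ∑ j ∈ Finset.Icc 1 n.toNat,
        ((n.toNat - 1).choose (j - 1) : ℝ) * lam k (j + k) / (Nat.factorial (j + k))
  else
    (-1 : ℝ) ^ k *
      ∑ j ∈ Finset.range ((k + n).toNat + 1),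
        ((k - j).choose (-n).toNat : ℝ) * (-1 : ℝ) ^ j * lam k j / (Nat.factorial j)

/-- The Lindelöf Hypothesis: `ζ(1/2 + it) = O(|t|^ε)` for every `ε > 0`. -/
def LindelofHypothesis : Prop :=
  ∀ ε : ℝ, 0 < ε → ∃ C : ℝ, ∀ t : ℝ, 1 ≤ |t| →
    ‖riemannZeta (1 / 2 + t * Complex.I)‖ ≤ C * |t| ^ ε

/-- `dk k n` is the Piltz divisor function `d_k(n)`: the number of representations of `n` as an
ordered product of `k` positive integers (the `k`-th Dirichlet-convolution power of `ζ`). -/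
noncomputable def dk (k n : ℕ) : ℕ := (ArithmeticFunction.zeta ^ k) n

/-- The coefficients `a_{j,k}` of the polynomial `P_k`. -/
noncomputable def aCoef (k j : ℕ) : ℝ :=
  (-1 : ℝ) ^ (k - 1 - j) *
    ∑ i ∈ Finset.range (k - 1 - j + 1), (-1 : ℝ) ^ i * lam k i / (Nat.factorial i)

/-- The error term `Δ_k(x) = (Σ_{1 ≤ n ≤ x} d_k(n)) - x P_k(log x)` in the Piltz divisor
problem. -/
noncomputable def Deltak (k : ℕ) (x : ℝ) : ℝ :=
  (∑ n ∈ Finset.Icc 1 ⌊x⌋₊, (dk k n : ℝ)) -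
    x * ∑ j ∈ Finset.range k, aCoef k j / (Nat.factorial j) * (Real.log x) ^ j

/-- The `n`-th Laguerre polynomial. -/
noncomputable def laguerre (n : ℕ) (u : ℝ) : ℝ :=
  ∑ j ∈ Finset.range (n + 1), (n.choose j : ℝ) * (-1 : ℝ) ^ j * u ^ j / (Nat.factorial j)

/-- The Bessel function of the first kind of order `0`. -/
noncomputable def besselJ0 (u : ℝ) : ℝ :=
  ∑' m : ℕ, (-1 : ℝ) ^ m * (u / 2) ^ (2 * m) / ((Nat.factorial m : ℝ) ^ 2)

/-- `φ_k(x) = ∫_1^∞ Δ_k(r) J₀(2 √(x log r)) r⁻² dr`. -/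
noncomputable def phik (k : ℕ) (x : ℝ) : ℝ :=
  ∫ r in Set.Ioi (1 : ℝ), Deltak k r * besselJ0 (2 * Real.sqrt (x * Real.log r)) / r ^ 2

lemma iteratedDeriv_zero_of_hasSum {a : ℕ → ℂ} {f : ℂ → ℂ}
    (hf : ∀ w : ℂ, ‖w‖ < 1 → HasSum (fun m => a m * w ^ m) (f w)) (m : ℕ) :
    iteratedDeriv m f 0 = m.factorial * a m := by
  have h : HasFPowerSeriesOnBall f (FormalMultilinearSeries.ofScalars ℂ a) 0 1 := by
    refine ⟨?_, one_pos, ?_⟩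
    · refine ENNReal.le_of_forall_nnreal_lt fun r hr => ?_
      refine FormalMultilinearSeries.le_radius_of_summable _ ?_
      have hr' : ‖((r : ℝ) : ℂ)‖ < 1 := by
        simpa using hr
      simpa [FormalMultilinearSeries.ofScalars_norm] using (hf _ hr').summable.norm
    · intro y hy
      have hy' : ‖y‖ < 1 := by
        have : ‖y‖₊ < 1 := by simpa [enorm_eq_nnnorm] using hy
        exact_mod_cast this
      simpa [FormalMultilinearSeries.ofScalars_apply_eq, smul_eq_mul, mul_comm] using hf y hy'
  have h2 := h.factorial_smul 1 m
  rw [iteratedDeriv_eq_iteratedFDeriv, ← h2]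
  simp

/-- The coefficient of `w ^ m` in `w ^ j * (1 - w) ^ (k - j)`, the exponent being an integer. -/
def oneSubPowCoeff (k j m : ℕ) : ℝ :=
  if m < j then 0 else
    if j ≤ k then (-1) ^ (m - j) * ((k - j).choose (m - j) : ℝ)
    else ((m - k - 1).choose (j - k - 1) : ℝ)

lemma hasSum_oneSubPowCoeff (k j : ℕ) {w : ℂ} (hw : ‖w‖ < 1) :
    HasSum (fun m => (oneSubPowCoeff k j m : ℂ) * w ^ m) ((1 - w) ^ k * ((1 - w)⁻¹ - 1) ^ j) := by
  have hw1 : 1 - w ≠ 0 := by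
    intro h
    have : w = 1 := (sub_eq_zero.mp h).symm
    simp [this] at hw
  have hid : (1 - w)⁻¹ - 1 = w * (1 - w)⁻¹ := by
    field_simp
    ring
  have hshift : HasSum (fun i => (oneSubPowCoeff k j (i + j) : ℂ) * w ^ i)
      ((1 - w) ^ k * (1 - w)⁻¹ ^ j) := by
    rcases le_or_gt j k with hjk | hjk
    · have e : (1 - w) ^ k * (1 - w)⁻¹ ^ j = (1 - w) ^ (k - j) := by
        rw [pow_sub₀ _ hw1 hjk, inv_pow]
      have e2 : (1 - w) ^ (k - j) = ∑ i ∈ Finset.range (k - j + 1),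
          (oneSubPowCoeff k j (i + j) : ℂ) * w ^ i := by
        rw [show 1 - w = -w + 1 by ring, add_pow]
        refine Finset.sum_congr rfl fun i _ => ?_
        simp [oneSubPowCoeff, hjk, neg_pow w i]
        ring
      rw [e, e2]
      refine hasSum_sum_of_ne_finset_zero fun i hi => ?_
      have : k - j < i := by simpa using hi
      simp [oneSubPowCoeff, hjk, Nat.choose_eq_zero_of_lt this]
    · have e : (1 - w) ^ k * (1 - w)⁻¹ ^ j = 1 / (1 - w) ^ (j - k - 1 + 1) := by
        rw [show j - k - 1 + 1 = j - k by omega, pow_sub₀ _ hw1 hjk.le, inv_pow]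
        field_simp
      rw [e]
      refine (hasSum_choose_mul_geometric_of_norm_lt_one (j - k - 1) hw).congr_fun fun i => ?_
      rw [show i + (j - k - 1) = i + j - k - 1 by omega]
      simp [oneSubPowCoeff, hjk.not_ge]
  rw [hid, mul_pow, mul_left_comm, ← hasSum_nat_add_iff' j]
  have h0 : ∑ i ∈ Finset.range j, (oneSubPowCoeff k j i : ℂ) * w ^ i = 0 := by
    refine Finset.sum_eq_zero fun i hi => ?_
    simp [oneSubPowCoeff, Finset.mem_range.mp hi]
  rw [h0, sub_zero]
  exact (hshift.mul_left (w ^ j)).congr_fun fun i => by ring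

lemma iteratedDeriv_cayley {G : ℂ → ℂ} (hG : AnalyticAt ℂ G 1) (k m : ℕ) :
    iteratedDeriv m (fun w => (1 - w) ^ k * G (1 - w)⁻¹) 0 = m.factorial *
      ∑ j ∈ Finset.range (m + 1), iteratedDeriv j G 1 / j.factorial * (oneSubPowCoeff k j m : ℂ) := by
  have hG' : AnalyticAt ℂ (fun x => G (1 + x)) 0 :=
    AnalyticAt.fun_comp (by simpa using hG) (by fun_prop)
  obtain ⟨F, hF, hFe⟩ := hG'.exists_eventuallyEq_sum_add_pow_mul (m + 1)
  have hu : AnalyticAt ℂ (fun w : ℂ => (1 - w)⁻¹ - 1) 0 :=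
    ((analyticAt_const.sub analyticAt_id).inv (by simp)).sub analyticAt_const
  have hut : Tendsto (fun w : ℂ => (1 - w)⁻¹ - 1) (𝓝 0) (𝓝 0) := by
    simpa using hu.continuousAt.tendsto
  set P : ℂ → ℂ := fun w => ∑ j ∈ Finset.range (m + 1),
    iteratedDeriv j G 1 / j.factorial * ((1 - w) ^ k * ((1 - w)⁻¹ - 1) ^ j) with hP
  set Q : ℂ → ℂ := fun w => w ^ (m + 1) *
    ((1 - w) ^ k * (1 - w)⁻¹ ^ (m + 1) * F ((1 - w)⁻¹ - 1)) with hQ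
  have hPQ : (fun w => (1 - w) ^ k * G (1 - w)⁻¹) =ᶠ[𝓝 0] P + Q := by
    have hne : ∀ᶠ w : ℂ in 𝓝 0, 1 - w ≠ 0 :=
      (by fun_prop : ContinuousAt (fun w : ℂ => 1 - w) 0).eventually_ne (by simp)
    filter_upwards [hut.eventually hFe, hne] with w hw hw1
    have hid : (1 - w)⁻¹ - 1 = w * (1 - w)⁻¹ := by
      field_simp
      ring
    have e1 : G (1 - w)⁻¹ = G (1 + ((1 - w)⁻¹ - 1)) := by congr 1; ring
    rw [e1, hw]
    simp only [Pi.add_apply, hP, hQ, mul_add, Finset.mul_sum, smul_eq_mul]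
    congr 1
    · refine Finset.sum_congr rfl fun j _ => ?_
      have := congrFun (iteratedDeriv_comp_const_add j G 1) 0
      simp only [add_zero] at this
      rw [this]
      ring
    · rw [← mul_assoc, ← mul_assoc, ← mul_assoc]
      congr 1
      nth_rewrite 1 [hid]
      rw [mul_pow]
      ring
  have hPs : ∀ w : ℂ, ‖w‖ < 1 → HasSum (fun i => (∑ j ∈ Finset.range (m + 1),
      iteratedDeriv j G 1 / j.factorial * (oneSubPowCoeff k j i : ℂ)) * w ^ i) (P w) := by
    intro w hw
    have := hasSum_sum (s := Finset.range (m + 1)) fun j _ =>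
      (hasSum_oneSubPowCoeff k j hw).mul_left (iteratedDeriv j G 1 / j.factorial)
    refine this.congr_fun fun i => ?_
    rw [Finset.sum_mul]
    exact Finset.sum_congr rfl fun j _ => by ring
  have hinv : AnalyticAt ℂ (fun w : ℂ => (1 - w)⁻¹) 0 :=
    (analyticAt_const.sub analyticAt_id).inv (by simp)
  have hFc : AnalyticAt ℂ (fun w : ℂ => F ((1 - w)⁻¹ - 1)) 0 :=
    AnalyticAt.fun_comp (by simpa using hF) hu
  have hone : AnalyticAt ℂ (fun w : ℂ => 1 - w) 0 := by fun_prop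
  have hR : AnalyticAt ℂ (fun w : ℂ => (1 - w) ^ k * (1 - w)⁻¹ ^ (m + 1) * F ((1 - w)⁻¹ - 1)) 0 :=
    ((hone.pow k).mul (hinv.pow (m + 1))).mul hFc
  have hQa : AnalyticAt ℂ Q 0 := (analyticAt_id.pow (m + 1)).mul hR
  have hPa : AnalyticAt ℂ P 0 :=
    Finset.analyticAt_fun_sum _ fun j _ =>
      analyticAt_const.mul ((hone.pow k).mul (hu.pow j))
  have hQ0 : iteratedDeriv m Q 0 = 0 := by
    refine (natCast_le_analyticOrderAt_iff_iteratedDeriv_eq_zero (n := m + 1) hQa).mp ?_ m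
      (Nat.lt_succ_self m)
    rw [natCast_le_analyticOrderAt hQa]
    exact ⟨_, hR, Eventually.of_forall fun w => by simp [hQ]⟩
  rw [hPQ.iteratedDeriv_eq, iteratedDeriv_add hPa.contDiffAt hQa.contDiffAt, hQ0, add_zero,
    iteratedDeriv_zero_of_hasSum hPs]

lemma zetaPowAux_eq (k : ℕ) : zetaPowAux k = fun s => riemannZeta₁ s ^ k := by
  funext s
  rcases eq_or_ne s 1 with rfl | hs
  · simp [zetaPowAux]
  · rw [zetaPowAux, Function.update_of_ne hs, riemannZeta_eq_inv_sub_mul hs,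
      mul_inv_cancel_left₀ (sub_ne_zero.mpr hs)]

/-- The function `ζ₁(s) / s` in the coordinate `w = (s - 1) / s`, which maps the half-plane
`1 / 2 < re s` onto the unit disc. -/
noncomputable def zetaDisc (w : ℂ) : ℂ := (1 - w) * riemannZeta₁ (1 - w)⁻¹

/-- The Taylor coefficients at `0` of the `k`-th power of `zetaDisc`. -/
noncomputable def zetaDiscCoeff (k m : ℕ) : ℂ :=
  iteratedDeriv m (fun w => zetaDisc w ^ k) 0 / m.factorial

lemma zetaDiscCoeff_eq_sum (k m : ℕ) : zetaDiscCoeff k m = ∑ j ∈ Finset.range (m + 1),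
    iteratedDeriv j (zetaPowAux k) 1 / j.factorial * (oneSubPowCoeff k j m : ℂ) := by
  have hG : AnalyticAt ℂ (zetaPowAux k) 1 := by
    rw [zetaPowAux_eq]
    exact (differentiable_riemannZeta₁.analyticAt 1).pow k
  have h := iteratedDeriv_cayley hG k m
  have hm : (m.factorial : ℂ) ≠ 0 := by exact_mod_cast m.factorial_ne_zero
  have hfun : (fun w => zetaDisc w ^ k) = fun w => (1 - w) ^ k * zetaPowAux k (1 - w)⁻¹ := by
    funext w
    rw [zetaPowAux_eq, zetaDisc, mul_pow]
  rw [zetaDiscCoeff, hfun, h, mul_div_cancel_left₀ _ hm]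

lemma re_zetaDiscCoeff (k m : ℕ) : (zetaDiscCoeff k m).re = ∑ j ∈ Finset.range (m + 1),
    lam k j / j.factorial * oneSubPowCoeff k j m := by
  rw [zetaDiscCoeff_eq_sum, Complex.re_sum]
  refine Finset.sum_congr rfl fun j _ => ?_
  rw [Complex.re_mul_ofReal, lam, Complex.div_natCast_re]

lemma ell_sq (k m : ℕ) : ell k ((m : ℤ) - k) ^ 2 = (zetaDiscCoeff k m).re ^ 2 := by
  have hsign : ∀ (n : ℕ) (x y : ℝ), x = y → ((-1 : ℝ) ^ n * x) ^ 2 = y ^ 2 := by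
    rintro n x _ rfl
    rw [mul_pow, ← pow_mul, mul_comm n, pow_mul]
    simp
  rw [re_zetaDiscCoeff, ell]
  split_ifs with h
  · refine hsign _ _ _ ?_
    obtain ⟨n, rfl⟩ : ∃ n : ℕ, m = n + 1 + k := ⟨m - 1 - k, by omega⟩
    have hn : ((↑(n + 1 + k) : ℤ) - k).toNat = n + 1 := by omega
    rw [hn, show n + 1 + k + 1 = (k + 1) + (n + 1) by ring, Finset.sum_range_add]
    have h0 : ∑ j ∈ Finset.range (k + 1),
        lam k j / j.factorial * oneSubPowCoeff k j (n + 1 + k) = 0 := by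
      refine Finset.sum_eq_zero fun j hj => ?_
      have hj' : j ≤ k := Nat.lt_succ_iff.mp (Finset.mem_range.mp hj)
      have : (k - j).choose (n + 1 + k - j) = 0 := Nat.choose_eq_zero_of_lt (by omega)
      simp [oneSubPowCoeff, hj', this]
    rw [h0, zero_add, ← Finset.Ico_add_one_right_eq_Icc, Finset.sum_Ico_eq_sum_range]
    refine Finset.sum_congr (by simp) fun j hj => ?_
    have hj' : j < n + 1 := by simpa using hj
    have e1 : ¬ (n + 1 + k < k + 1 + j) := by omega
    have e2 : ¬ (k + 1 + j ≤ k) := by omega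
    rw [oneSubPowCoeff, if_neg e1, if_neg e2, show 1 + j + k = k + 1 + j by ring,
      show n + 1 + k - k - 1 = n + 1 - 1 by omega, show k + 1 + j - k - 1 = 1 + j - 1 by omega]
    ring
  · have hmk : m ≤ k := by omega
    have e1 : (-((m : ℤ) - k)).toNat = k - m := by omega
    have e2 : ((k : ℤ) + ((m : ℤ) - k)).toNat = m := by omega
    rw [e1, e2]
    have : ∑ j ∈ Finset.range (m + 1), lam k j / j.factorial * oneSubPowCoeff k j m =
        (-1) ^ m * ∑ j ∈ Finset.range (m + 1),
          ((k - j).choose (k - m) : ℝ) * (-1 : ℝ) ^ j * lam k j / j.factorial := by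
      rw [Finset.mul_sum]
      refine Finset.sum_congr rfl fun j hj => ?_
      have hj' : j ≤ m := Nat.lt_succ_iff.mp (Finset.mem_range.mp hj)
      have hc : (k - j).choose (m - j) = (k - j).choose (k - m) :=
        Nat.choose_symm_of_eq_add (by omega)
      have hs : (-1 : ℝ) ^ (m - j) = (-1) ^ m * (-1) ^ j := by
        rw [pow_sub₀ _ (by norm_num) hj', ← inv_pow]
        norm_num
      rw [oneSubPowCoeff, if_neg hj'.not_gt, if_pos (hj'.trans hmk), hc, hs]
      ring
    rw [this, hsign k _ _ rfl, hsign m _ _ rfl]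

lemma one_sub_ne_zero_of_norm_lt_one {w : ℂ} (hw : ‖w‖ < 1) : 1 - w ≠ 0 := by
  intro h
  rw [← sub_eq_zero.mp h] at hw
  simp at hw

lemma hasSum_zetaDiscCoeff (k : ℕ) {w : ℂ} (hw : ‖w‖ < 1) :
    HasSum (fun m => zetaDiscCoeff k m * w ^ m) (zetaDisc w ^ k) := by
  have hd : DifferentiableOn ℂ (fun w => zetaDisc w ^ k) (Metric.ball 0 1) := by
    intro z hz
    have hz1 : 1 - z ≠ 0 := one_sub_ne_zero_of_norm_lt_one (by simpa using hz)
    have h1 : DifferentiableAt ℂ (fun w : ℂ => 1 - w) z := by fun_prop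
    exact ((h1.mul ((differentiable_riemannZeta₁ _).comp z (h1.inv hz1))).pow
      k).differentiableWithinAt
  have h := Complex.hasSum_taylorSeries_on_ball hd (z := w) (by simpa using hw)
  refine h.congr_fun fun m => ?_
  simp only [zetaDiscCoeff, sub_zero, smul_eq_mul]
  ring

lemma riemannZeta₁_conj (s : ℂ) :
    riemannZeta₁ ((starRingEnd ℂ) s) = (starRingEnd ℂ) (riemannZeta₁ s) := by
  rcases eq_or_ne s 1 with rfl | hs
  · simp
  have hs' : (starRingEnd ℂ) s ≠ 1 := fun h => hs (by simpa using congrArg (starRingEnd ℂ) h)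
  have h := riemannZeta_conj s
  rw [riemannZeta_eq_inv_sub_mul hs, riemannZeta_eq_inv_sub_mul hs'] at h
  simp only [map_mul, map_inv₀, map_sub, map_one] at h
  exact mul_left_cancel₀ (inv_ne_zero (sub_ne_zero.mpr hs')) h

lemma conj_zetaDiscCoeff (k m : ℕ) :
    (starRingEnd ℂ) (zetaDiscCoeff k m) = zetaDiscCoeff k m := by
  have h : ∀ w : ℂ, ‖w‖ < 1 →
      HasSum (fun m => (starRingEnd ℂ) (zetaDiscCoeff k m) * w ^ m) (zetaDisc w ^ k) := by
    intro w hw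
    have hw' : ‖(starRingEnd ℂ) w‖ < 1 := by simpa using hw
    have h1 := (hasSum_zetaDiscCoeff k hw').map (starRingEnd ℂ) Complex.continuous_conj
    have hq : (starRingEnd ℂ) (zetaDisc ((starRingEnd ℂ) w) ^ k) = zetaDisc w ^ k := by
      have : (1 - (starRingEnd ℂ) w)⁻¹ = (starRingEnd ℂ) (1 - w)⁻¹ := by simp
      rw [zetaDisc, this, riemannZeta₁_conj]
      simp [zetaDisc]
    rw [hq] at h1
    exact h1.congr_fun fun m => by simp
  have h1 := iteratedDeriv_zero_of_hasSum h m
  have h2 := iteratedDeriv_zero_of_hasSum (fun w hw => hasSum_zetaDiscCoeff k hw) m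
  exact mul_left_cancel₀ (by exact_mod_cast m.factorial_ne_zero) (h1.symm.trans h2)

lemma ell_sq_eq_norm_sq (k m : ℕ) : ell k ((m : ℤ) - k) ^ 2 = ‖zetaDiscCoeff k m‖ ^ 2 := by
  have h := Complex.conj_eq_iff_real.mp (conj_zetaDiscCoeff k m)
  obtain ⟨r, hr⟩ := h
  rw [ell_sq, hr]
  simp

/-- The fractional part, restricted to `(1, ∞)`. -/
noncomputable def fractTail : ℝ → ℂ := (Set.Ioi 1).indicator fun x => ((Int.fract x : ℝ) : ℂ)

lemma norm_fractTail_le (x : ℝ) : ‖fractTail x‖ ≤ 1 := by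
  by_cases hx : x ∈ Set.Ioi (1 : ℝ)
  · simp [fractTail, hx, abs_of_nonneg (Int.fract_nonneg x), (Int.fract_lt_one x).le]
  · simp [fractTail, hx]

lemma measurable_fractTail : Measurable fractTail :=
  (Complex.measurable_ofReal.comp measurable_fract).indicator measurableSet_Ioi

lemma mellin_fractTail (s : ℂ) : mellin fractTail (-s) =
    ∫ x in Set.Ioi (1 : ℝ), ((Int.fract x : ℝ) : ℂ) * (x : ℂ) ^ (-(s + 1)) := by
  rw [mellin, ← integral_indicator measurableSet_Ioi, ← integral_indicator measurableSet_Ioi]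
  congr 1
  funext x
  by_cases hx : x ∈ Set.Ioi (1 : ℝ)
  · have hx0 : x ∈ Set.Ioi (0 : ℝ) := lt_trans zero_lt_one (Set.mem_Ioi.mp hx)
    rw [Set.indicator_of_mem hx, Set.indicator_of_mem hx0, fractTail, Set.indicator_of_mem hx,
      smul_eq_mul, mul_comm]
    congr 2
    ring
  · simp [fractTail, hx]

lemma differentiableAt_mellin_fractTail {s : ℂ} (hs : 0 < s.re) :
    DifferentiableAt ℂ (fun s => mellin fractTail (-s)) s := by
  have h : DifferentiableAt ℂ (mellin fractTail) (-s) := by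
    refine mellin_differentiableAt_of_isBigO_rpow (a := 0) (b := -s.re - 1) ?_ ?_ (by simpa using hs)
      ?_ (by simp)
    · refine LocallyIntegrable.locallyIntegrableOn ?_ _
      exact (locallyIntegrable_const (1 : ℝ)).mono measurable_fractTail.aestronglyMeasurable
        (ae_of_all _ fun x => by simpa using norm_fractTail_le x)
    · refine IsBigO.of_bound 1 (Eventually.of_forall fun x => ?_)
      simpa using norm_fractTail_le x
    · refine IsBigO.of_bound 1 ?_
      have : ∀ᶠ x : ℝ in 𝓝[>] 0, x < 1 := nhdsWithin_le_nhds (Iio_mem_nhds one_pos)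
      filter_upwards [this] with x hx
      simp [fractTail, not_lt.mpr hx.le]
  exact DifferentiableAt.comp (g := mellin fractTail) (f := fun s => -s) s h differentiableAt_id.neg

lemma norm_mellin_fractTail_le {s : ℂ} (hs : 0 < s.re) : ‖mellin fractTail (-s)‖ ≤ 1 / s.re := by
  rw [mellin_fractTail]
  have h1 : -(s.re + 1) < -1 := by linarith
  have h2 : ∫ x in Set.Ioi (1 : ℝ), x ^ (-(s.re + 1)) = 1 / s.re := by
    rw [integral_Ioi_rpow_of_lt h1 one_pos]
    simp
  rw [← h2]
  refine norm_integral_le_of_norm_le (integrableOn_Ioi_rpow_of_lt h1 one_pos) ?_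
  filter_upwards [ae_restrict_mem measurableSet_Ioi] with x hx
  have hx0 : 0 < x := lt_trans zero_lt_one hx
  rw [norm_mul, Complex.norm_cpow_eq_rpow_re_of_pos hx0]
  have : ‖((Int.fract x : ℝ) : ℂ)‖ ≤ 1 := by
    simp [abs_of_nonneg (Int.fract_nonneg x), (Int.fract_lt_one x).le]
  calc _ ≤ 1 * x ^ (-(s + 1)).re := by gcongr
    _ = _ := by simp

lemma riemannZeta₁_eq_of_one_lt_re {s : ℂ} (hs : 1 < s.re) :
    riemannZeta₁ s = s - s * (s - 1) * mellin fractTail (-s) := by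
  have hs1 : s ≠ 1 := by
    rintro rfl
    simp at hs
  have hz : riemannZeta s = s * ∫ t in Set.Ioi (1 : ℝ), (⌊t⌋₊ : ℂ) * (t : ℂ) ^ (-(s + 1)) := by
    rw [← LSeries_one_eq_riemannZeta hs]
    have := LSeries_eq_mul_integral_of_nonneg (fun _ => (1 : ℝ)) zero_le_one hs
      (IsBigO.of_bound 1 (Eventually.of_forall fun n => by simp)) (fun _ => zero_le_one)
    simpa [Pi.one_def] using this
  have hre : (-(s + 1)).re < -1 := by
    simp only [neg_re, add_re, one_re]
    linarith
  have hi1 : IntegrableOn (fun t : ℝ => (t : ℂ) ^ (-s)) (Set.Ioi 1) :=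
    integrableOn_Ioi_cpow_of_lt (by simpa using hs) one_pos
  have hi2 : IntegrableOn (fun t : ℝ => ((Int.fract t : ℝ) : ℂ) * (t : ℂ) ^ (-(s + 1))) (Set.Ioi 1) := by
    refine Integrable.bdd_mul (c := 1) (integrableOn_Ioi_cpow_of_lt hre one_pos)
      (Complex.measurable_ofReal.comp measurable_fract).aestronglyMeasurable
      (ae_of_all _ fun x => ?_)
    simp [abs_of_nonneg (Int.fract_nonneg x), (Int.fract_lt_one x).le]
  have hsplit : ∫ t in Set.Ioi (1 : ℝ), (⌊t⌋₊ : ℂ) * (t : ℂ) ^ (-(s + 1)) =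
      (∫ t in Set.Ioi (1 : ℝ), (t : ℂ) ^ (-s)) - mellin fractTail (-s) := by
    rw [mellin_fractTail, ← integral_sub hi1 hi2]
    refine setIntegral_congr_fun measurableSet_Ioi fun t ht => ?_
    have ht0 : (0 : ℝ) < t := lt_trans zero_lt_one ht
    have hfl : (⌊t⌋₊ : ℂ) = t - (Int.fract t : ℝ) := by
      have h1 : ((⌊t⌋₊ : ℝ)) = ((⌊t⌋ : ℤ) : ℝ) := natCast_floor_eq_intCast_floor ht0.le
      have h2 : ((⌊t⌋₊ : ℝ)) = t - Int.fract t := by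
        rw [h1]
        linarith [Int.floor_add_fract t]
      exact_mod_cast congrArg (fun x : ℝ => (x : ℂ)) h2
    have hpow : (t : ℂ) ^ (-s) = t * (t : ℂ) ^ (-(s + 1)) := by
      have : (t : ℂ) ≠ 0 := by exact_mod_cast ht0.ne'
      rw [show -s = 1 + -(s + 1) by ring, Complex.cpow_add _ _ this, Complex.cpow_one]
    simp only [hfl, hpow]
    ring
  have hint : ∫ t in Set.Ioi (1 : ℝ), (t : ℂ) ^ (-s) = 1 / (s - 1) := by
    have := integral_Ioi_cpow_of_lt (a := -s) (by simpa using hs) one_pos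
    rw [this]
    simp only [ofReal_one, one_cpow]
    rw [show -s + 1 = -(s - 1) by ring, neg_div_neg_eq]
  have hne : s - 1 ≠ 0 := sub_ne_zero.mpr hs1
  have h := hz
  rw [hsplit, hint, riemannZeta_eq_inv_sub_mul hs1] at h
  calc riemannZeta₁ s = (s - 1) * ((s - 1)⁻¹ * riemannZeta₁ s) := by field_simp
    _ = _ := by
      rw [h]
      field_simp

lemma riemannZeta₁_eq_of_re_pos {s : ℂ} (hs : 0 < s.re) :
    riemannZeta₁ s = s - s * (s - 1) * mellin fractTail (-s) := by
  have ho : IsOpen {s : ℂ | 0 < s.re} := isOpen_lt continuous_const Complex.continuous_re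
  have hd : DifferentiableOn ℂ (fun s => s - s * (s - 1) * mellin fractTail (-s))
      {s : ℂ | 0 < s.re} := fun z hz =>
    (differentiableAt_id.sub ((differentiableAt_id.mul (differentiableAt_id.sub_const 1)).mul
      (differentiableAt_mellin_fractTail hz))).differentiableWithinAt
  have h1 : AnalyticOnNhd ℂ riemannZeta₁ {s : ℂ | 0 < s.re} :=
    differentiable_riemannZeta₁.differentiableOn.analyticOnNhd ho
  have hev : riemannZeta₁ =ᶠ[𝓝 2] fun s => s - s * (s - 1) * mellin fractTail (-s) := by
    have : {s : ℂ | 1 < s.re} ∈ 𝓝 (2 : ℂ) :=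
      (isOpen_lt continuous_const Complex.continuous_re).mem_nhds (by simp)
    filter_upwards [this] with z hz using riemannZeta₁_eq_of_one_lt_re hz
  exact h1.eqOn_of_preconnected_of_eventuallyEq (hd.analyticOnNhd ho)
    (convex_halfSpace_re_gt 0).isPreconnected (by simp) hev hs

lemma norm_riemannZeta₁_le {s : ℂ} (hs : 0 < s.re) :
    ‖riemannZeta₁ s‖ ≤ ‖s‖ + ‖s‖ * ‖s - 1‖ / s.re := by
  rw [riemannZeta₁_eq_of_re_pos hs]
  refine (norm_sub_le _ _).trans ?_
  rw [norm_mul, norm_mul, mul_div_assoc, mul_assoc]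
  gcongr
  calc ‖s - 1‖ * ‖mellin fractTail (-s)‖ ≤ ‖s - 1‖ * (1 / s.re) := by
        gcongr
        exact norm_mellin_fractTail_le hs
    _ = ‖s - 1‖ / s.re := by ring

lemma zetaDisc_one_sub_inv (s : ℂ) : zetaDisc (1 - s⁻¹) = s⁻¹ * riemannZeta₁ s := by
  simp [zetaDisc]

lemma norm_one_sub_inv_sq {s : ℂ} (hs : s ≠ 0) :
    ‖1 - s⁻¹‖ ^ 2 = 1 - (2 * s.re - 1) / ‖s‖ ^ 2 := by
  have h : 1 - s⁻¹ = (s - 1) / s := by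
    field_simp
  have hn : ‖s‖ ^ 2 ≠ 0 := by simpa using hs
  rw [h, norm_div, div_pow]
  have : ‖s - 1‖ ^ 2 = ‖s‖ ^ 2 - (2 * s.re - 1) := by
    rw [Complex.sq_norm, Complex.sq_norm, Complex.normSq_apply, Complex.normSq_apply]
    simp
    ring
  rw [this, sub_div, div_self hn]

lemma norm_riemannZeta₁_div_pow_le {k : ℕ} (hk : Summable fun m => ‖zetaDiscCoeff k m‖ ^ 2) {s : ℂ}
    (hs : 1 / 2 < s.re) : (‖riemannZeta₁ s‖ / ‖s‖) ^ k ≤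
      (∑' m, ‖zetaDiscCoeff k m‖ ^ 2) + ‖s‖ ^ 2 / (2 * s.re - 1) := by
  have hs0 : s ≠ 0 := by
    rintro rfl
    norm_num at hs
  have hn : 0 < ‖s‖ ^ 2 := by positivity
  have hσ : 0 < 2 * s.re - 1 := by linarith
  set w : ℂ := 1 - s⁻¹ with hw
  have hw2 : ‖w‖ ^ 2 = 1 - (2 * s.re - 1) / ‖s‖ ^ 2 := norm_one_sub_inv_sq hs0
  have hw2lt : ‖w‖ ^ 2 < 1 := by
    rw [hw2]
    have : 0 < (2 * s.re - 1) / ‖s‖ ^ 2 := by positivity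
    linarith
  have hw1 : ‖w‖ < 1 := by
    by_contra! h
    nlinarith
  have hsum := hasSum_zetaDiscCoeff k hw1
  have hgeo := hasSum_geometric_of_lt_one (sq_nonneg ‖w‖) hw2lt
  have hX : (‖riemannZeta₁ s‖ / ‖s‖) ^ k = ‖zetaDisc w ^ k‖ := by
    rw [hw, zetaDisc_one_sub_inv, norm_pow, norm_mul, norm_inv]
    ring
  have hinv : (1 - ‖w‖ ^ 2)⁻¹ = ‖s‖ ^ 2 / (2 * s.re - 1) := by
    rw [hw2, sub_sub_cancel, inv_div]
  rw [hX, ← hsum.tsum_eq, ← hinv]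
  refine tsum_of_norm_bounded (hk.hasSum.add hgeo) fun m => ?_
  rw [norm_mul, norm_pow, ← pow_mul, mul_comm 2 m, pow_mul]
  nlinarith [sq_nonneg (‖zetaDiscCoeff k m‖ - ‖w‖ ^ m), sq_nonneg ‖zetaDiscCoeff k m‖,
    sq_nonneg (‖w‖ ^ m)]

lemma norm_deriv_riemannZeta₁_le {T : ℝ} (hT : 1 ≤ T) {z : ℂ} (hz : 1 / 2 ≤ z.re)
    (hzT : ‖z‖ ≤ 3 * T) : ‖deriv riemannZeta₁ z‖ ≤ 336 * T ^ 2 := by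
  have h : ∀ y ∈ Metric.sphere z (1 / 4), ‖riemannZeta₁ y‖ ≤ 84 * T ^ 2 := by
    intro y hy
    have hyz : ‖y - z‖ = 1 / 4 := by simpa [dist_eq_norm] using hy
    have hre : 1 / 4 ≤ y.re := by
      have := (abs_le.mp (Complex.abs_re_le_norm (y - z))).1
      rw [hyz, Complex.sub_re] at this
      linarith
    have hy4 : ‖y‖ ≤ 4 * T := by
      have := norm_add_le (y - z) z
      rw [sub_add_cancel, hyz] at this
      linarith
    have hy1 : ‖y - 1‖ ≤ 5 * T := by
      have := norm_sub_le y 1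
      rw [norm_one] at this
      linarith
    refine (norm_riemannZeta₁_le (by linarith)).trans ?_
    have h1 : ‖y‖ * ‖y - 1‖ / y.re ≤ 4 * T * (5 * T) / (1 / 4) := by gcongr
    nlinarith
  have := Complex.norm_deriv_le_of_forall_mem_sphere_norm_le (by norm_num : (0 : ℝ) < 1 / 4)
    differentiable_riemannZeta₁.diffContOnCl h
  linarith

lemma lindelofHypothesis_of_summable
    (h : ∀ k : ℕ, 0 < k → Summable fun m => ‖zetaDiscCoeff k m‖ ^ 2) : LindelofHypothesis := by
  intro ε hε
  obtain ⟨k, hk⟩ := exists_nat_gt (3 / ε)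
  have hk0 : 0 < k := by
    have : 0 < 3 / ε := by positivity
    exact_mod_cast this.trans hk
  set S : ℝ := ∑' m, ‖zetaDiscCoeff k m‖ ^ 2 with hS
  have hS0 : 0 ≤ S := tsum_nonneg fun m => by positivity
  refine ⟨336 + 3 * (S + 5), fun t ht => ?_⟩
  set T := |t| with hT
  have hT0 : 0 < T := by linarith
  have hTinv : T⁻¹ ≤ 1 := inv_le_one_of_one_le₀ ht
  set s₀ : ℂ := 1 / 2 + t * Complex.I with hs₀
  set s : ℂ := s₀ + (T⁻¹ : ℝ) with hs
  have hre₀ : s₀.re = 1 / 2 := by simp [hs₀]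
  have hre : s.re = 1 / 2 + T⁻¹ := by rw [hs, Complex.add_re, hre₀, Complex.ofReal_re]
  have hnorm₀ : ‖s₀‖ ≤ 1 / 2 + T := by
    refine (norm_add_le _ _).trans ?_
    simp [hT]
  have hnorm : ‖s‖ ≤ 3 * T := by
    refine (norm_add_le _ _).trans ?_
    rw [Complex.norm_real, Real.norm_of_nonneg (by positivity)]
    linarith
  have hsT : T ≤ ‖s‖ := by
    have := Complex.abs_im_le_norm s
    simpa [hs, hs₀, hT] using this
  have hs1 : T ≤ ‖s₀ - 1‖ := by
    have := Complex.abs_im_le_norm (s₀ - 1)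
    simpa [hs₀, hT] using this
  have hmean : ‖riemannZeta₁ s₀ - riemannZeta₁ s‖ ≤ 336 * T := by
    have hconv : Convex ℝ ({z : ℂ | 1 / 2 ≤ z.re} ∩ Metric.closedBall 0 (3 * T)) :=
      (convex_halfSpace_re_ge _).inter (convex_closedBall _ _)
    have := hconv.norm_image_sub_le_of_norm_deriv_le (f := riemannZeta₁) (C := 336 * T ^ 2)
      (fun z _ => differentiable_riemannZeta₁ z)
      (fun z hz => norm_deriv_riemannZeta₁_le ht hz.1 (by simpa using hz.2))
      (x := s) (y := s₀) ⟨by simp only [Set.mem_ofPred_eq, hre]; linarith [inv_pos.mpr hT0],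
        by simpa using hnorm⟩
      ⟨by simp only [Set.mem_ofPred_eq, hre₀]; norm_num, by simp only [mem_closedBall_zero_iff]; linarith⟩
    refine this.trans_eq ?_
    rw [hs, sub_add_cancel_left, norm_neg, Complex.norm_real, Real.norm_of_nonneg (by positivity)]
    field_simp
  have hTε : 1 ≤ T ^ ε := Real.one_le_rpow ht hε.le
  have hX : ‖riemannZeta₁ s‖ / ‖s‖ ≤ (S + 5) * T ^ ε := by
    refine le_of_pow_le_pow_left₀ hk0.ne' (by positivity) ?_
    refine (norm_riemannZeta₁_div_pow_le (h k hk0) (by rw [hre]; linarith [inv_pos.mpr hT0])).trans ?_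
    have h1 : ‖s‖ ^ 2 / (2 * s.re - 1) ≤ 5 * T ^ 3 := by
      rw [hre, show 2 * (1 / 2 + T⁻¹) - 1 = 2 * T⁻¹ by ring]
      calc ‖s‖ ^ 2 / (2 * T⁻¹) ≤ (3 * T) ^ 2 / (2 * T⁻¹) := by gcongr
        _ = 9 / 2 * T ^ 3 := by field_simp; ring
        _ ≤ 5 * T ^ 3 := by
          have : 0 < T ^ 3 := by positivity
          linarith
    have hT3 : T ^ 3 ≤ (T ^ ε) ^ k := by
      rw [← Real.rpow_natCast T 3, ← Real.rpow_natCast (T ^ ε) k, ← Real.rpow_mul hT0.le]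
      refine Real.rpow_le_rpow_of_exponent_le ht ?_
      rw [div_lt_iff₀ hε] at hk
      push_cast
      linarith
    have hT1 : 1 ≤ T ^ 3 := one_le_pow₀ ht
    have hS5 : S + 5 ≤ (S + 5) ^ k := le_self_pow₀ (by linarith) hk0.ne'
    calc S + ‖s‖ ^ 2 / (2 * s.re - 1) ≤ S * T ^ 3 + 5 * T ^ 3 := by
          gcongr
          exact le_mul_of_one_le_right hS0 hT1
      _ = (S + 5) * T ^ 3 := by ring
      _ ≤ (S + 5) ^ k * (T ^ ε) ^ k := by gcongr
      _ = _ := by rw [mul_pow]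
  have hs₀1 : s₀ ≠ 1 := by
    intro h
    rw [h] at hre₀
    norm_num at hre₀
  have hZs : ‖riemannZeta₁ s‖ ≤ 3 * T * ((S + 5) * T ^ ε) := by
    have hpos : 0 < ‖s‖ := by linarith
    rw [div_le_iff₀ hpos] at hX
    refine hX.trans ?_
    rw [mul_comm]
    gcongr
  have hZ : ‖riemannZeta₁ s₀‖ ≤ 336 * T + 3 * T * ((S + 5) * T ^ ε) := by
    have := norm_add_le (riemannZeta₁ s₀ - riemannZeta₁ s) (riemannZeta₁ s)
    rw [sub_add_cancel] at this
    linarith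
  rw [riemannZeta_eq_inv_sub_mul hs₀1, norm_mul, norm_inv]
  calc ‖s₀ - 1‖⁻¹ * ‖riemannZeta₁ s₀‖ ≤ T⁻¹ * (336 * T + 3 * T * ((S + 5) * T ^ ε)) := by gcongr
    _ = 336 + 3 * (S + 5) * T ^ ε := by field_simp
    _ ≤ (336 + 3 * (S + 5)) * T ^ ε := by linarith

lemma sum_norm_sq_eq_integral (c : ℕ → ℂ) (N : ℕ) :
    ∑ m ∈ range N, ‖c m‖ ^ 2 =
      (2 * π)⁻¹ * ∫ θ in (0 : ℝ)..2 * π, ‖∑ m ∈ range N, c m * circleMap 0 1 θ ^ m‖ ^ 2 := by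
  set p : Polynomial ℂ := ∑ m ∈ range N, Polynomial.monomial m (c m) with hp
  have hcoeff : ∀ m, p.coeff m = if m < N then c m else 0 := by
    intro m
    simp [hp, Polynomial.coeff_monomial]
  have heval : ∀ z, p.eval z = ∑ m ∈ range N, c m * z ^ m := by
    intro z
    simp [hp, Polynomial.eval_finsetSum]
  have h := Polynomial.sum_sq_norm_coeff_eq_circleAverage p
  simp only [Real.circleAverage, heval, smul_eq_mul] at h
  rw [← h]
  symm
  have hsub : p.support ⊆ range N := by
    intro m hm
    rw [Polynomial.mem_support_iff, hcoeff] at hm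
    simpa using fun h => hm (if_neg (not_lt.mpr h))
  rw [Finset.sum_subset hsub]
  · refine Finset.sum_congr rfl fun m hm => ?_
    rw [hcoeff, if_pos (Finset.mem_range.mp hm)]
  · intro m _ hm
    rw [Polynomial.notMem_support_iff.mp hm]
    simp

lemma sum_norm_sq_mul_pow_le {c : ℕ → ℂ} {f : ℂ → ℂ}
    (hf : ∀ w : ℂ, ‖w‖ < 1 → HasSum (fun m => c m * w ^ m) (f w)) {b : ℝ → ℝ}
    (hb : IntervalIntegrable b volume 0 (2 * π)) {r : ℝ} (hr0 : 0 ≤ r) (hr1 : r < 1)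
    (hfb : ∀ θ ∈ Set.Ioo 0 (2 * π), ‖f (circleMap 0 r θ)‖ ^ 2 ≤ b θ) (M : ℕ) :
    ∑ m ∈ range M, (‖c m‖ * r ^ m) ^ 2 ≤ (2 * π)⁻¹ * ∫ θ in (0 : ℝ)..2 * π, b θ := by
  have hpi : 0 ≤ 2 * π := by positivity
  set F : ℕ → ℝ → ℂ := fun N θ => ∑ m ∈ range N, c m * r ^ m * circleMap 0 1 θ ^ m with hF
  have hnorm : ∀ m, ‖c m * (r : ℂ) ^ m‖ = ‖c m‖ * r ^ m := by
    intro m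
    rw [norm_mul, norm_pow, Complex.norm_of_nonneg hr0]
  have hsumm : Summable fun m => ‖c m‖ * r ^ m := by
    have := (hf r (by rwa [Complex.norm_of_nonneg hr0])).summable.norm
    simpa only [hnorm] using this
  set S := ∑' m, ‖c m‖ * r ^ m with hS
  have hFS : ∀ N θ, ‖F N θ‖ ≤ S := by
    intro N θ
    refine (norm_sum_le _ _).trans ?_
    simp only [norm_mul _ (circleMap 0 1 _ ^ _), hnorm, norm_pow, norm_circleMap_zero, abs_one,
      one_pow, mul_one]
    exact hsumm.sum_le_tsum _ fun m _ => by positivity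
  have hlim : ∀ θ, Tendsto (fun N => F N θ) atTop (𝓝 (f (circleMap 0 r θ))) := by
    intro θ
    have h := (hf (circleMap 0 r θ) (by simpa [abs_of_nonneg hr0] using hr1)).tendsto_sum_nat
    refine h.congr fun N => Finset.sum_congr rfl fun m _ => ?_
    simp [circleMap, mul_pow, mul_assoc]
  have hint : Tendsto (fun N => ∫ θ in (0 : ℝ)..2 * π, ‖F N θ‖ ^ 2) atTop
      (𝓝 (∫ θ in (0 : ℝ)..2 * π, ‖f (circleMap 0 r θ)‖ ^ 2)) := by
    refine intervalIntegral.tendsto_integral_filter_of_dominated_convergence (fun _ => S ^ 2)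
      (.of_forall fun N => ?_) (.of_forall fun N => .of_forall fun θ _ => ?_) (by simp)
      (.of_forall fun θ _ => ((hlim θ).norm.pow 2))
    · have : Continuous fun θ => ‖F N θ‖ ^ 2 := by
        simp only [hF]
        fun_prop
      exact this.aestronglyMeasurable
    · rw [norm_pow, norm_norm]
      gcongr
      exact hFS N θ
  have hmono : ∫ θ in (0 : ℝ)..2 * π, ‖f (circleMap 0 r θ)‖ ^ 2 ≤ ∫ θ in (0 : ℝ)..2 * π, b θ := by
    rw [intervalIntegral.integral_of_le hpi, intervalIntegral.integral_of_le hpi,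
      integral_Ioc_eq_integral_Ioo, integral_Ioc_eq_integral_Ioo]
    refine integral_mono_of_nonneg (.of_forall fun θ => by positivity)
      (((intervalIntegrable_iff_integrableOn_Ioo_of_le hpi).mp hb)) ?_
    exact (ae_restrict_mem measurableSet_Ioo).mono hfb
  refine le_trans ?_ (mul_le_mul_of_nonneg_left hmono (by positivity))
  refine ge_of_tendsto (hint.const_mul _) ?_
  filter_upwards [eventually_ge_atTop M] with N hN
  rw [← sum_norm_sq_eq_integral (fun m => c m * r ^ m) N]
  simp only [hnorm]
  exact Finset.sum_le_sum_of_subset_of_nonneg (Finset.range_subset_range.mpr hN)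
    fun _ _ _ => by positivity

lemma summable_norm_sq_of_norm_sq_le {c : ℕ → ℂ} {f : ℂ → ℂ}
    (hf : ∀ w : ℂ, ‖w‖ < 1 → HasSum (fun m => c m * w ^ m) (f w)) {b : ℝ → ℝ}
    (hb : IntervalIntegrable b volume 0 (2 * π))
    (hfb : ∀ r : ℝ, 0 ≤ r → r < 1 → ∀ θ ∈ Set.Ioo 0 (2 * π), ‖f (circleMap 0 r θ)‖ ^ 2 ≤ b θ) :
    Summable fun m => ‖c m‖ ^ 2 := by
  refine summable_of_sum_range_le (c := (2 * π)⁻¹ * ∫ θ in (0 : ℝ)..2 * π, b θ)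
    (fun m => by positivity) fun M => ?_
  have hlim : Tendsto (fun r : ℝ => ∑ m ∈ range M, (‖c m‖ * r ^ m) ^ 2) (𝓝[<] 1)
      (𝓝 (∑ m ∈ range M, ‖c m‖ ^ 2)) := by
    refine Tendsto.mono_left ?_ nhdsWithin_le_nhds
    exact Continuous.tendsto' (by fun_prop) _ _ (by simp)
  refine le_of_tendsto hlim ?_
  filter_upwards [Ioo_mem_nhdsLT (zero_lt_one (α := ℝ))] with r hr
  exact sum_norm_sq_mul_pow_le hf hb hr.1.le hr.2 (hfb r hr.1.le hr.2) M

lemma abs_sin_half_le_norm_one_sub_circleMap (r θ : ℝ) (hr : 0 ≤ r) :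
    |Real.sin (θ / 2)| ≤ ‖1 - circleMap 0 r θ‖ := by
  refine abs_le_of_sq_le_sq ?_ (norm_nonneg _)
  have hcos : Real.cos θ = 1 - 2 * Real.sin (θ / 2) ^ 2 := by
    have := Real.cos_two_mul (θ / 2)
    rw [mul_div_cancel₀ θ two_ne_zero, Real.cos_sq'] at this
    linarith
  have h : ‖1 - circleMap 0 r θ‖ ^ 2 = (1 - r) ^ 2 + 4 * r * Real.sin (θ / 2) ^ 2 := by
    rw [Complex.sq_norm, Complex.normSq_apply]
    simp only [circleMap, zero_add, Complex.sub_re, Complex.one_re, Complex.re_ofReal_mul,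
      Complex.exp_ofReal_mul_I_re, Complex.sub_im, Complex.one_im, Complex.im_ofReal_mul,
      Complex.exp_ofReal_mul_I_im, zero_sub]
    linear_combination r ^ 2 * Real.sin_sq_add_cos_sq θ - 2 * r * hcos
  rw [h]
  have h1 : Real.sin (θ / 2) ^ 2 ≤ 1 := Real.sin_sq_le_one _
  have h0 : 0 ≤ Real.sin (θ / 2) ^ 2 := sq_nonneg _
  nlinarith [sq_nonneg (1 - r), mul_nonneg hr h0, mul_nonneg hr (sub_nonneg.mpr h1),
    sq_nonneg (2 * r - 1)]

lemma norm_one_sub_circleMap_rpow_le {r θ : ℝ} (hr : 0 ≤ r) (hθ : θ ∈ Set.Ioo 0 (2 * π)) {a : ℝ}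
    (ha : a ≤ 0) :
    ‖1 - circleMap 0 r θ‖ ^ a ≤ (θ / π) ^ a + ((2 * π - θ) / π) ^ a := by
  have hpi := Real.pi_pos
  obtain ⟨h0, h1⟩ := hθ
  have h := abs_sin_half_le_norm_one_sub_circleMap r θ hr
  have hA : 0 < θ / π := by positivity
  have hB : 0 < (2 * π - θ) / π := div_pos (by linarith) hpi
  rcases le_total θ π with hle | hle
  · have hs := (Real.mul_le_sin (x := θ / 2) (by linarith) (by linarith)).trans
      ((le_abs_self _).trans h)
    rw [show 2 / π * (θ / 2) = θ / π by ring] at hs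
    have := Real.rpow_le_rpow_of_nonpos hA hs ha
    have := Real.rpow_nonneg hB.le a
    linarith
  · have hs := (Real.mul_le_sin (x := π - θ / 2) (by linarith) (by linarith))
    rw [Real.sin_pi_sub, show 2 / π * (π - θ / 2) = (2 * π - θ) / π by ring] at hs
    have := Real.rpow_le_rpow_of_nonpos hB (hs.trans ((le_abs_self _).trans h)) ha
    have := Real.rpow_nonneg hA.le a
    linarith

lemma intervalIntegrable_circle_singularity {a : ℝ} (ha : -1 < a) (C : ℝ) :
    IntervalIntegrable (fun θ : ℝ => C * ((θ / π) ^ a + ((2 * π - θ) / π) ^ a))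
      volume 0 (2 * π) := by
  have h : IntervalIntegrable (fun x : ℝ => x ^ a) volume 0 2 :=
    intervalIntegral.intervalIntegrable_rpow' ha
  have h1 : IntervalIntegrable (fun θ : ℝ => (θ / π) ^ a) volume 0 (2 * π) := by
    have := h.comp_mul_right (c := π⁻¹)
    simpa [div_eq_mul_inv] using this
  have h2 : IntervalIntegrable (fun θ : ℝ => ((2 * π - θ) / π) ^ a) volume 0 (2 * π) := by
    have := h1.comp_sub_left (2 * π)
    simpa using this.symm
  exact (h1.add h2).const_mul C

lemma one_le_norm_add_one {z : ℂ} (hz : 0 ≤ z.re) : 1 ≤ ‖z + 1‖ := by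
  have := Complex.re_le_norm (z + 1)
  simp only [Complex.add_re, Complex.one_re] at this
  linarith

lemma norm_riemannZeta₁_add_half_le {z : ℂ} (hz : 0 ≤ z.re) :
    ‖riemannZeta₁ (z + 1 / 2)‖ ≤ 3 * (‖z‖ + 1) ^ 2 := by
  have hre : (z + 1 / 2).re = z.re + 1 / 2 := by simp
  have h1 : ‖z + 1 / 2‖ ≤ ‖z‖ + 1 := by
    refine (norm_add_le _ _).trans ?_
    norm_num
  have h2 : ‖z + 1 / 2 - 1‖ ≤ ‖z‖ + 1 := by
    rw [show z + 1 / 2 - 1 = z - 1 / 2 by ring]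
    refine (norm_sub_le _ _).trans ?_
    norm_num
  refine (norm_riemannZeta₁_le (by rw [hre]; linarith)).trans ?_
  have h3 : ‖z + 1 / 2‖ * ‖z + 1 / 2 - 1‖ / (z + 1 / 2).re ≤
      (‖z‖ + 1) * (‖z‖ + 1) / (1 / 2) := by
    rw [hre]
    gcongr
    linarith
  nlinarith [norm_nonneg z]

lemma norm_riemannZeta₁_ofReal_add_half_le {x : ℝ} (hx : 0 ≤ x) :
    ‖riemannZeta₁ (x + 1 / 2)‖ ≤ 2 * (x + 1) := by
  have hcast : (x : ℂ) + 1 / 2 = ((x + 1 / 2 : ℝ) : ℂ) := by push_cast; ring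
  have h := norm_riemannZeta₁_le (s := (x + 1 / 2 : ℝ)) (by rw [Complex.ofReal_re]; linarith)
  rw [hcast]
  rw [← Complex.ofReal_one, ← Complex.ofReal_sub, Complex.norm_real, Complex.norm_real,
    Complex.ofReal_re, Real.norm_of_nonneg (by linarith : 0 ≤ x + 1 / 2),
    mul_div_cancel_left₀ _ (by positivity), Real.norm_eq_abs] at h
  refine h.trans ?_
  have : |x + 1 / 2 - 1| ≤ x + 1 := abs_le.mpr ⟨by linarith, by linarith⟩
  linarith

lemma LindelofHypothesis.exists_norm_riemannZeta₁_imag_le (h : LindelofHypothesis) {ε : ℝ}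
    (hε : 0 < ε) :
    ∃ C : ℝ, 0 ≤ C ∧ ∀ t : ℝ, ‖riemannZeta₁ (t * I + 1 / 2)‖ ≤ C * ‖(t * I + 1 : ℂ)‖ ^ (1 + ε) := by
  obtain ⟨C, hC⟩ := h ε hε
  have hC0 : 0 ≤ C := by
    have := (norm_nonneg _).trans (hC 1 (by simp))
    simpa using this
  refine ⟨C + 12, by positivity, fun t => ?_⟩
  have h1 : 1 ≤ ‖(t * I + 1 : ℂ)‖ := one_le_norm_add_one (by simp)
  have hpow : 1 ≤ ‖(t * I + 1 : ℂ)‖ ^ (1 + ε) := Real.one_le_rpow h1 (by linarith)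
  rcases le_total |t| 1 with ht | ht
  · have h2 := norm_riemannZeta₁_add_half_le (z := t * I) (by simp)
    rw [norm_mul, Complex.norm_I, mul_one, Complex.norm_real, Real.norm_eq_abs] at h2
    have h3 : 3 * (|t| + 1) ^ 2 ≤ 12 := by nlinarith [abs_nonneg t]
    nlinarith
  · set s : ℂ := t * I + 1 / 2 with hs
    have hs1 : s ≠ 1 := by
      intro h
      have := congrArg Complex.re h
      norm_num [hs] at this
    have hnorm : ‖s - 1‖ = ‖(t * I + 1 / 2 : ℂ)‖ := by
      rw [← sq_eq_sq₀ (norm_nonneg _) (norm_nonneg _), Complex.sq_norm, Complex.sq_norm,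
        Complex.normSq_apply, Complex.normSq_apply]
      simp [hs]
      norm_num
    have hle : ‖s - 1‖ ≤ ‖(t * I + 1 : ℂ)‖ := by
      rw [hnorm, ← sq_le_sq₀ (norm_nonneg _) (norm_nonneg _), Complex.sq_norm, Complex.sq_norm,
        Complex.normSq_apply, Complex.normSq_apply]
      simp
      norm_num
    have htle : |t| ≤ ‖(t * I + 1 : ℂ)‖ := by
      have := Complex.abs_im_le_norm (t * I + 1)
      simpa using this
    have hZ : riemannZeta₁ s = (s - 1) * riemannZeta s := by
      rw [riemannZeta_eq_inv_sub_mul hs1, mul_inv_cancel_left₀ (sub_ne_zero.mpr hs1)]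
    have hζ := hC t ht
    rw [add_comm (1 / 2 : ℂ)] at hζ
    calc ‖riemannZeta₁ s‖ = ‖s - 1‖ * ‖riemannZeta s‖ := by rw [hZ, norm_mul]
      _ ≤ ‖(t * I + 1 : ℂ)‖ * (C * ‖(t * I + 1 : ℂ)‖ ^ ε) := by
        gcongr
        refine hζ.trans ?_
        gcongr
      _ = C * ‖(t * I + 1 : ℂ)‖ ^ (1 + ε) := by
        rw [Real.rpow_add (by linarith), Real.rpow_one]
        ring
      _ ≤ (C + 12) * ‖(t * I + 1 : ℂ)‖ ^ (1 + ε) := by nlinarith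

lemma LindelofHypothesis.exists_norm_riemannZeta₁_add_half_le (h : LindelofHypothesis) {ε : ℝ}
    (hε : 0 < ε) :
    ∃ C : ℝ, 0 ≤ C ∧ ∀ z : ℂ, 0 ≤ z.re →
      ‖riemannZeta₁ (z + 1 / 2)‖ ≤ C * ‖z + 1‖ ^ (1 + ε) := by
  obtain ⟨C, hC0, hC⟩ := h.exists_norm_riemannZeta₁_imag_le hε
  refine ⟨C, hC0, fun z hz => ?_⟩
  set f : ℂ → ℂ := fun z => riemannZeta₁ (z + 1 / 2) / (z + 1) ^ ((1 + ε : ℝ) : ℂ) with hf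
  have hnorm : ∀ z, ‖f z‖ = ‖riemannZeta₁ (z + 1 / 2)‖ / ‖z + 1‖ ^ (1 + ε) := by
    intro z
    rw [hf, norm_div, Complex.norm_cpow_real]
  have hden : ∀ z : ℂ, 0 ≤ z.re → 1 ≤ ‖z + 1‖ ^ (1 + ε) := fun z hz =>
    Real.one_le_rpow (one_le_norm_add_one hz) (by linarith)
  have hd : ∀ z : ℂ, 0 ≤ z.re → DifferentiableAt ℂ f z := by
    intro z hz
    have hslit : z + 1 ∈ Complex.slitPlane := Or.inl (by
      simp only [Complex.add_re, Complex.one_re]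
      linarith)
    refine DifferentiableAt.div ?_ ?_ ?_
    · exact (differentiable_riemannZeta₁ _).comp z (by fun_prop)
    · exact DifferentiableAt.cpow (by fun_prop) (by fun_prop) hslit
    · rw [← norm_pos_iff, Complex.norm_cpow_real]
      linarith [hden z hz]
  have hdc : DiffContOnCl ℂ f {z | 0 < z.re} := by
    refine DifferentiableOn.diffContOnCl fun z hz => (hd z ?_).differentiableWithinAt
    rw [Complex.closure_setOfPred_lt_re] at hz
    exact hz
  have hexp : ∃ c < (2 : ℝ), ∃ B, f =O[Bornology.cobounded ℂ ⊓ 𝓟 {z | 0 < z.re}]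
      fun z => Real.exp (B * ‖z‖ ^ c) := by
    refine ⟨1, by norm_num, 2, IsBigO.of_bound 3 ?_⟩
    filter_upwards [mem_inf_of_right (mem_principal_self _)] with z hz
    have hz' : 0 ≤ z.re := le_of_lt hz
    have h1 : (‖z‖ + 1) ^ 2 ≤ Real.exp ‖z‖ ^ 2 := by
      gcongr
      exact Real.add_one_le_exp _
    rw [hnorm, Real.rpow_one, Real.norm_of_nonneg (Real.exp_pos _).le, two_mul, Real.exp_add,
      ← sq]
    refine (div_le_self (norm_nonneg _) (hden z hz')).trans ?_
    linarith [norm_riemannZeta₁_add_half_le hz']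
  have hre : IsBoundedUnder (· ≤ ·) atTop fun x : ℝ => ‖f x‖ := by
    refine isBoundedUnder_of_eventually_le (a := 2) ?_
    filter_upwards [eventually_ge_atTop 0] with x hx
    have hx1 : ‖(x : ℂ) + 1‖ = x + 1 := by
      rw [← Complex.ofReal_one, ← Complex.ofReal_add, Complex.norm_of_nonneg (by linarith)]
    have hpow : x + 1 ≤ (x + 1) ^ (1 + ε) := Real.self_le_rpow_of_one_le (by linarith) (by linarith)
    rw [hnorm, hx1, div_le_iff₀ (by linarith)]
    linarith [norm_riemannZeta₁_ofReal_add_half_le hx]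
  have him : ∀ x : ℝ, ‖f (x * I)‖ ≤ C := by
    intro x
    have := hden (x * I) (by simp)
    rw [hnorm, div_le_iff₀ (by linarith)]
    exact hC x
  have := PhragmenLindelof.right_half_plane_of_bounded_on_real hdc hexp hre him hz
  rwa [hnorm, div_le_iff₀ (by linarith [hden z hz])] at this

lemma half_lt_re_inv_one_sub {w : ℂ} (hw : ‖w‖ < 1) : 1 / 2 < ((1 - w)⁻¹).re := by
  have h0 : 0 < Complex.normSq (1 - w) := Complex.normSq_pos.mpr (one_sub_ne_zero_of_norm_lt_one hw)
  have hw2 : w.re * w.re + w.im * w.im < 1 := by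
    rw [← Complex.normSq_apply, ← Complex.sq_norm]
    nlinarith [norm_nonneg w]
  rw [Complex.inv_re, lt_div_iff₀ h0, Complex.normSq_apply]
  simp only [Complex.sub_re, Complex.one_re, Complex.sub_im, Complex.one_im]
  nlinarith

lemma LindelofHypothesis.exists_norm_zetaDisc_le (h : LindelofHypothesis) {ε : ℝ} (hε : 0 < ε) :
    ∃ C : ℝ, 0 ≤ C ∧ ∀ w : ℂ, ‖w‖ < 1 → ‖zetaDisc w‖ ≤ C * ‖1 - w‖ ^ (-ε) := by
  obtain ⟨C, hC0, hC⟩ := h.exists_norm_riemannZeta₁_add_half_le hε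
  refine ⟨C * 2 ^ (1 + ε), by positivity, fun w hw => ?_⟩
  have hre := half_lt_re_inv_one_sub hw
  have hpos : 0 < ‖1 - w‖ := norm_pos_iff.mpr (one_sub_ne_zero_of_norm_lt_one hw)
  set s : ℂ := (1 - w)⁻¹ with hs
  have hsn : ‖s‖ = ‖1 - w‖⁻¹ := norm_inv _
  have hhalf : 1 / 2 ≤ ‖s‖ := hre.le.trans (Complex.re_le_norm s)
  have hb := hC (s - 1 / 2) (by
    rw [Complex.sub_re]
    norm_num
    linarith)
  rw [sub_add_cancel] at hb
  have hs2 : ‖s - 1 / 2 + 1‖ ≤ 2 * ‖s‖ := by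
    rw [show s - 1 / 2 + 1 = s + 1 / 2 by ring]
    refine (norm_add_le _ _).trans ?_
    have : ‖(1 / 2 : ℂ)‖ = 1 / 2 := by norm_num
    linarith
  calc ‖zetaDisc w‖ = ‖1 - w‖ * ‖riemannZeta₁ s‖ := by rw [zetaDisc, norm_mul]
    _ ≤ ‖1 - w‖ * (C * (2 * ‖s‖) ^ (1 + ε)) := by
      gcongr
      refine hb.trans ?_
      gcongr
    _ = C * 2 ^ (1 + ε) * ‖1 - w‖ ^ (-ε) := by
      rw [hsn, Real.mul_rpow (by norm_num) (by positivity), Real.inv_rpow hpos.le,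
        Real.rpow_add hpos, Real.rpow_one, Real.rpow_neg hpos.le]
      field_simp

lemma LindelofHypothesis.summable_norm_sq_zetaDiscCoeff (h : LindelofHypothesis) {k : ℕ}
    (hk : 0 < k) : Summable fun m => ‖zetaDiscCoeff k m‖ ^ 2 := by
  obtain ⟨C, hC0, hC⟩ := h.exists_norm_zetaDisc_le (ε := 1 / (4 * k)) (by positivity)
  refine summable_norm_sq_of_norm_sq_le (fun w hw => hasSum_zetaDiscCoeff k hw)
    (intervalIntegrable_circle_singularity (a := -(1 / 2)) (by norm_num) ((C ^ k) ^ 2))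
    fun r hr0 hr1 θ hθ => ?_
  have hw : ‖circleMap 0 r θ‖ < 1 := by simpa [abs_of_nonneg hr0] using hr1
  calc ‖zetaDisc (circleMap 0 r θ) ^ k‖ ^ 2
      ≤ ((C * ‖1 - circleMap 0 r θ‖ ^ (-(1 / (4 * k) : ℝ))) ^ k) ^ 2 := by
        rw [norm_pow]
        gcongr
        exact hC _ hw
    _ = (C ^ k) ^ 2 * ‖1 - circleMap 0 r θ‖ ^ (-(1 / 2) : ℝ) := by
        rw [mul_pow, mul_pow, ← pow_mul (_ ^ (-(1 / (4 * k) : ℝ))), ← Real.rpow_mul_natCast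
          (norm_nonneg _)]
        congr 2
        push_cast
        field_simp
        norm_num
    _ ≤ _ := by
        gcongr
        exact norm_one_sub_circleMap_rpow_le hr0 hθ (by norm_num)

theorem stmt1 :
    LindelofHypothesis ↔
      ∀ k : ℕ, 0 < k → Summable fun m : ℕ => (ell k ((m : ℤ) - k)) ^ 2 := by
  simp_rw [ell_sq_eq_norm_sq]
  exact ⟨fun h _ hk => h.summable_norm_sq_zetaDiscCoeff hk, lindelofHypothesis_of_summable⟩
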